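/- Let α be a partition with all parts at least 2, ℓ(α) ≥ 4, and overlapping partition p = (3,2,1,0,…,0) (that is, p_1 = 3, p_2 = 2, p_3 = 1, and p_i = 0 for i ≥ 4). Then R_α^p has full Schur support, i.e. [R_α^p] = [α, (|α|−3, 3)], if and only if α_1 < Σ_{q=2}^{ℓ(α)} α_q − 2 and α_2 < Σ_{q=3}^{ℓ(α)} α_q. -/

import Mathlib

namespace RibbonSupport

/-- A partition: a weakly decreasing list of positive integers. -/
def IsPartition (a : List ℕ) : Prop := a.Pairwise (· ≥ ·) ∧ ∀ x ∈ a, 0 < x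

/-- All parts of the list are at least `m`. -/
def PartsGE (a : List ℕ) (m : ℕ) : Prop := ∀ x ∈ a, m ≤ x

/-- Dominance order `lam ⪯ mu` on partitions of the same size. -/
def DomLE (lam mu : List ℕ) : Prop :=
  lam.sum = mu.sum ∧ ∀ i, (lam.take i).sum ≤ (mu.take i).sum

/-- The number of nonzero parts. -/
def lenp (p : List ℕ) : ℕ := p.countP (fun x => decide (x ≠ 0))

/-- `p` is an overlapping partition for the monotone ribbon with row lengths `a`:
`p` has the same length as `a`, its last entry is `0`, and consecutive entries
decrease by `0` or `1`. -/
def IsOverlapSeq (a p : List ℕ) : Prop :=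
  p.length = a.length ∧ p.getD (a.length - 1) 0 = 0 ∧
    ∀ i, i + 1 < a.length →
      p.getD i 0 = p.getD (i + 1) 0 ∨ p.getD i 0 = p.getD (i + 1) 0 + 1

/-- Rows `i` and `i+1` (0-based, top to bottom) of `R_a^p` overlap
(share exactly one column) exactly when `p_i = p_{i+1} + 1`. -/
def ovOf (p : List ℕ) : ℕ → Bool := fun i => decide (p.getD i 0 = p.getD (i + 1) 0 + 1)

def rowOffset (a : List ℕ) (i : ℕ) : ℕ := (a.take i).sum

/-- `w` is the reading word (rows right-to-left, top to bottom) of a semistandard filling of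
the ribbon with row lengths `a` (top to bottom) in which consecutive rows `i`, `i+1` share
exactly one column when `ov i = true` and no column otherwise.  Semistandardness amounts to:
within each row block the word is weakly decreasing (rows weakly increase left to right), and
at each overlapping gap the word strictly increases (columns strictly increase downwards). -/
def IsRibbonWord (a : List ℕ) (ov : ℕ → Bool) (w : List ℕ) : Prop :=
  w.length = a.sum ∧
  (∀ i j, i < a.length → j + 1 < a.getD i 0 →
    w.getD (rowOffset a i + j + 1) 0 ≤ w.getD (rowOffset a i + j) 0) ∧
  (∀ i, i + 1 < a.length → ov i = true →
    w.getD (rowOffset a (i + 1) - 1) 0 < w.getD (rowOffset a (i + 1)) 0)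

/-- Yamanouchi (lattice) word: each prefix has at least as many letters `j` as `j+1`. -/
def IsYam (w : List ℕ) : Prop := ∀ k j, (w.take k).count (j + 2) ≤ (w.take k).count (j + 1)

/-- The word `w` has content `nu` (and only positive letters). -/
def HasContent (w : List ℕ) (nu : List ℕ) : Prop :=
  (∀ j, w.count (j + 1) = nu.getD j 0) ∧ w.count 0 = 0

/-- There is an LR filling of the ribbon `(a, ov)` with content `nu`. -/
def InSupportOv (a : List ℕ) (ov : ℕ → Bool) (nu : List ℕ) : Prop :=
  ∃ w : List ℕ, IsRibbonWord a ov w ∧ IsYam w ∧ HasContent w nu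

/-- `nu` is in the Schur support of the monotone ribbon `R_a^p`. -/
def InSupport (a p nu : List ℕ) : Prop := InSupportOv a (ovOf p) nu

/-- `nu` is in the Schur support of the connected ribbon `R_a`. -/
def InSupportConn (a nu : List ℕ) : Prop := InSupportOv a (fun _ => true) nu

/-- `nu` belongs to the Schur interval `[a, (|a| - p₁, p₁)]` in dominance order. -/
def InInterval (a p nu : List ℕ) : Prop :=
  DomLE a nu ∧ DomLE nu [a.sum - p.getD 0 0, p.getD 0 0]

/-- The Schur support of `R_a^p`, as a set of partitions. -/
def SupportSet (a p : List ℕ) : Set (List ℕ) := {nu | IsPartition nu ∧ InSupport a p nu}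

/-- The Schur interval of `R_a^p`, as a set of partitions. -/
def IntervalSet (a p : List ℕ) : Set (List ℕ) := {nu | IsPartition nu ∧ InInterval a p nu}

/-- `R_a^p` has full Schur support. -/
def FullSupport (a p : List ℕ) : Prop := SupportSet a p = IntervalSet a p

/-- The Schur support of the connected ribbon `R_a`, as a set of partitions. -/
def SupportSetConn (a : List ℕ) : Set (List ℕ) := {nu | IsPartition nu ∧ InSupportConn a nu}

/-- `ϱ_i` (1-based `i`): `Σ_{q=i+1}^{ℓ(a)} a_q − p_{i+1} + 1`. -/
def rho (a p : List ℕ) (i : ℕ) : ℕ := (a.drop i).sum + 1 - p.getD i 0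

/-- Entry `j` (1-based) of the `i`-witness vector: `[ϱ_i − a_j]₊`. -/
def wit (a p : List ℕ) (i j : ℕ) : ℕ := rho a p i - a.getD (j - 1) 0

/-- Size of the `i`-witness vector. -/
def witSize (a p : List ℕ) (i : ℕ) : ℕ := ∑ j ∈ Finset.Icc 1 i, wit a p i j

/-! ### Tableaux -/

/-- Cells (0-based `(row, column)`) of the Young diagram of `lam`. -/
def cells (lam : List ℕ) : Finset (ℕ × ℕ) :=
  (Finset.range lam.length ×ˢ Finset.range (lam.sum + 1)).filter
    (fun x => x.2 < lam.getD x.1 0)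

/-- `T` is a semistandard Young tableau of shape `lam` and content `al`
(normalized to vanish off the diagram). -/
def IsTab (lam al : List ℕ) (T : ℕ × ℕ → ℕ) : Prop :=
  (∀ x, x ∉ cells lam → T x = 0) ∧
  (∀ x ∈ cells lam, 1 ≤ T x) ∧
  (∀ i c, (i, c + 1) ∈ cells lam → T (i, c) ≤ T (i, c + 1)) ∧
  (∀ i c, (i + 1, c) ∈ cells lam → T (i, c) < T (i + 1, c)) ∧
  (∀ k, ((cells lam).filter (fun x => T x = k + 1)).card = al.getD k 0)

/-- Standardization of a tableau: entries are renumbered `1, …, N` in increasing order of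
value, entries of equal value being numbered from southwest to northeast (by column). -/
def stdz (lam : List ℕ) (T : ℕ × ℕ → ℕ) : ℕ × ℕ → ℕ := fun x =>
  if x ∈ cells lam then
    ((cells lam).filter (fun y => T y < T x ∨ (T y = T x ∧ y.2 < x.2))).card + 1
  else 0

/-- `n` is a descent of the standard tableau `U`: the entry `n+1` lies in a strictly
lower row than the entry `n`. -/
def IsDescent (lam : List ℕ) (U : ℕ × ℕ → ℕ) (n : ℕ) : Prop :=
  ∃ x ∈ cells lam, ∃ y ∈ cells lam, U x = n ∧ U y = n + 1 ∧ x.1 < y.1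

/-- `S(al)`: the set of proper partial sums of the composition `al`. -/
def Sset (al : List ℕ) : Set ℕ := {n | ∃ k, 0 < k ∧ k < al.length ∧ n = (al.take k).sum}

/-- `s ∈ D(T)`: some entry `s+1` of `T` lies in a strictly lower row than some entry `s`. -/
def TabDescent (lam : List ℕ) (T : ℕ × ℕ → ℕ) (s : ℕ) : Prop :=
  ∃ x ∈ cells lam, ∃ y ∈ cells lam, T x = s ∧ T y = s + 1 ∧ x.1 < y.1

/-- The word `w_{T̂}` of `T`: its `u`-th letter (1-based) is the 1-based row index of the
entry `u` of the standardization `T̂` of `T`. -/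
def wordOf (lam : List ℕ) (T : ℕ × ℕ → ℕ) : List ℕ :=
  (List.range lam.sum).map fun n =>
    ∑ x ∈ (cells lam).filter (fun x => stdz lam T x = n + 1), (x.1 + 1)

/-- `j ∈ {2, …, ℓ(al)}` is a critical number of `T ∈ Tab(lam, al)`:
`w_{α_1+⋯+α_{j-1}} = w_{α_1+⋯+α_{j-1}+1}` in the word of `T`. -/
def CriticalNum (lam al : List ℕ) (T : ℕ × ℕ → ℕ) (j : ℕ) : Prop :=
  2 ≤ j ∧ j ≤ al.length ∧
    (wordOf lam T).getD ((al.take (j - 1)).sum - 1) 0 =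
      (wordOf lam T).getD ((al.take (j - 1)).sum) 0

/-- `j ∈ {2, …, ℓ(al)}` is a negligible critical number of `T`:
`w_{α_1+⋯+α_{j-1}} > w_{α_1+⋯+α_{j-1}+1}` in the word of `T`. -/
def NegligibleNum (lam al : List ℕ) (T : ℕ × ℕ → ℕ) (j : ℕ) : Prop :=
  2 ≤ j ∧ j ≤ al.length ∧
    (wordOf lam T).getD ((al.take (j - 1)).sum) 0 <
      (wordOf lam T).getD ((al.take (j - 1)).sum - 1) 0

/-- The overlapping partition of the ribbon encoded by its gap pattern `b`
(`b j = true` iff rows `j` and `j+1`, 0-based, overlap). -/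
def povOf (b : List Bool) : List ℕ :=
  (List.range (b.length + 1)).map fun i => (b.drop i).count true

/-! ### Connected ribbons with rows in arbitrary order -/

/-- Starting column (0-based) of row `i` of the connected ribbon with row lengths `b`. -/
def startConn (b : List ℕ) (i : ℕ) : ℕ := (b.drop (i + 1)).sum + (i + 1) - b.length

/-- Number of columns of the connected ribbon with row lengths `b`. -/
def ncols (b : List ℕ) : ℕ := b.sum + 1 - b.length

/-- Length of column `c` of the connected ribbon with row lengths `b`. -/
def colLen (b : List ℕ) (c : ℕ) : ℕ :=
  ((Finset.range b.length).filter
    (fun i => startConn b i ≤ c ∧ c < startConn b i + b.getD i 0)).card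

/-- Deletion rank of row `j`: the number of rows deleted strictly before row `j` when one
repeatedly deletes a longest remaining row in highest (most northern) position. -/
def delRank (g : List ℕ) (j : ℕ) : ℕ :=
  ((Finset.range g.length).filter
    (fun j' => g.getD j 0 < g.getD j' 0 ∨ (g.getD j' 0 = g.getD j 0 ∧ j' < j))).card

/-- The overlapping partition of the connected ribbon with row lengths `g`:
its `(d+1)`-st entry is the number of length-two columns of the ribbon remaining
after deleting `d` rows as above, i.e. the number of adjacent pairs of surviving rows. -/
def ppiList (g : List ℕ) : List ℕ :=
  (List.range g.length).map fun d =>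
    ((Finset.range (g.length - 1)).filter
      (fun j => d ≤ delRank g j ∧ d ≤ delRank g (j + 1))).card

/-!
A partition `ν ⪰ α` lies in the support of `R_α^p` exactly when `ν_i + 4 - i ≤ Σ_{q ≥ i} α_q` for
`i ≤ 3`. These bounds are necessary: a lattice word has no letter `i` above row `i`, and each
overlap below the start of row `i` forces at least one letter different from `i`. Conversely, one
fills the ribbon from the bottom, removing from `ν` as high a horizontal strip as possible for each
row after the fourth, and enough boxes from the first three rows of `ν` to restore the bounds for
the remaining ribbon; the four rows left are filled explicitly.

In the interval only the bound for `i = 1` is automatic. If `α₁ + 2 ≥ Σ_{q ≥ 2} α_q`, the bound for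
`i = 2` fails for `(α₁ + 1, Σ_{q ≥ 2} α_q - 1)`; if `α₂ ≥ Σ_{q ≥ 3} α_q`, the bound for `i = 3`
fails for `(α₁, α₂, Σ_{q ≥ 3} α_q)`. Otherwise `ν ⪰ α` implies both.
-/

/-! ### Lists of natural numbers -/

theorem sum_take_add_one (l : List ℕ) (i : ℕ) :
    (l.take (i + 1)).sum = (l.take i).sum + l.getD i 0 := by
  rw [List.take_add_one, List.sum_append, List.getD_eq_getElem?_getD]
  cases l[i]? <;> simp

theorem sum_take_eq_sum_range (l : List ℕ) (i : ℕ) :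
    (l.take i).sum = ∑ j ∈ Finset.range i, l.getD j 0 := by
  induction i with
  | zero => simp
  | succ i ih => rw [sum_take_add_one, Finset.sum_range_succ, ih]

theorem sum_drop_eq_getD_add (l : List ℕ) (i : ℕ) :
    (l.drop i).sum = l.getD i 0 + (l.drop (i + 1)).sum := by
  have h := List.sum_take_add_sum_drop l i
  have h' := List.sum_take_add_sum_drop l (i + 1)
  have := sum_take_add_one l i
  omega

theorem sum_take_le_sum (l : List ℕ) (i : ℕ) : (l.take i).sum ≤ l.sum :=
  (List.take_sublist i l).sum_le_sum fun _ _ ↦ Nat.zero_le _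

theorem antitone_getD {l : List ℕ} (h : l.Pairwise (· ≥ ·)) : Antitone (l.getD · 0) := by
  refine antitone_nat_of_succ_le fun i ↦ ?_
  rcases lt_or_ge (i + 1) l.length with hi | hi
  · rw [List.getD_eq_getElem _ _ hi, List.getD_eq_getElem _ _ (by omega)]
    exact List.pairwise_iff_getElem.1 h i (i + 1) _ hi (Nat.lt_succ_self i)
  · rw [List.getD_eq_default _ _ hi]
    exact Nat.zero_le _

theorem PartsGE.mono {l : List ℕ} {k m : ℕ} (h : PartsGE l m) (hk : k ≤ m) : PartsGE l k :=
  fun x hx ↦ hk.trans (h x hx)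

theorem PartsGE.le_getD {l : List ℕ} {m i : ℕ} (h : PartsGE l m) (hi : i < l.length) :
    m ≤ l.getD i 0 := by
  rw [List.getD_eq_getElem _ _ hi]
  exact h _ (List.getElem_mem hi)

theorem PartsGE.length_sub_mul_le_sum_drop {l : List ℕ} {m : ℕ} (h : PartsGE l m) (j : ℕ) :
    (l.length - j) * m ≤ (l.drop j).sum := by
  rw [← List.length_drop]
  exact List.card_nsmul_le_sum _ _ fun x hx ↦ h x (List.mem_of_mem_drop hx)

theorem sum_range_count_succ {l : List ℕ} {n : ℕ} (h : ∀ x ∈ l, 0 < x ∧ x ≤ n) :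
    ∑ j ∈ Finset.range n, l.count (j + 1) = l.length := by
  rw [Finset.range_eq_Ico, Finset.sum_Ico_add' (fun x ↦ l.count x)]
  simpa using Multiset.sum_count_eq_card (s := Finset.Ico (0 + 1) (n + 1)) (m := (l : Multiset ℕ))
    fun x hx ↦ by have := h x hx; exact Finset.mem_Ico.2 (by omega)

theorem count_drop_le_add (l : List ℕ) (c : ℕ) {i j : ℕ} (hij : i ≤ j) :
    (l.drop i).count c ≤ (l.drop j).count c + (j - i) := by
  obtain ⟨d, rfl⟩ := Nat.exists_eq_add_of_le hij
  rw [← List.take_append_drop d (l.drop i), List.count_append, List.drop_drop]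
  have : ((l.drop i).take d).count c ≤ d := List.count_le_length.trans (List.length_take_le _ _)
  omega

theorem count_drop_of_getD_ne {l : List ℕ} {c i : ℕ} (h : l.getD i 0 ≠ c) :
    (l.drop i).count c = (l.drop (i + 1)).count c := by
  rcases lt_or_ge i l.length with hi | hi
  · rw [List.drop_eq_getElem_cons hi, List.count_cons_of_ne]
    rwa [List.getD_eq_getElem _ _ hi] at h
  · simp [List.drop_eq_nil_of_le, hi, Nat.le_succ_of_le hi]

theorem count_drop_le_add_one_of_getD_ne {l : List ℕ} {i : ℕ} (c : ℕ)
    (h : l.getD i 0 ≠ l.getD (i + 1) 0) :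
    (l.drop i).count c ≤ (l.drop (i + 1 + 1)).count c + 1 := by
  have hi := count_drop_le_add l c (Nat.le_add_right i 1)
  have hi' := count_drop_le_add l c (Nat.le_add_right (i + 1) 1)
  rcases eq_or_ne (l.getD (i + 1) 0) c with rfl | hc
  · have := count_drop_of_getD_ne h
    omega
  · have := count_drop_of_getD_ne hc
    omega

/-! ### Necessary conditions -/

section Necessity

variable {a p w ν : List ℕ} {ov : ℕ → Bool} {i : ℕ}

theorem rowOffset_add_one (a : List ℕ) (i : ℕ) :
    rowOffset a (i + 1) = rowOffset a i + a.getD i 0 :=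
  sum_take_add_one a i

theorem IsRibbonWord.getD_le_row_head (hw : IsRibbonWord a ov w) (hi : i < a.length) {j : ℕ}
    (hj : j < a.getD i 0) : w.getD (rowOffset a i + j) 0 ≤ w.getD (rowOffset a i) 0 := by
  induction j with
  | zero => rfl
  | succ j ih => exact (hw.2.1 i j hi hj).trans (ih (by omega))

theorem IsYam.getD_le_add_one (hw : IsYam w) {n : ℕ} (h : ∀ x ∈ w.take n, x ≤ i) :
    w.getD n 0 ≤ i + 1 := by
  by_contra! hlt
  obtain ⟨j, hj⟩ := Nat.exists_eq_add_of_le' (show 2 ≤ w.getD n 0 by omega)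
  have hn : n < w.length := by
    by_contra! hn
    rw [List.getD_eq_default _ _ hn] at hlt
    omega
  rw [List.getD_eq_getElem _ _ hn] at hj hlt
  have hyam := hw (n + 1) j
  rw [List.take_succ_eq_append_getElem hn, List.count_append, List.count_append, hj,
    List.count_singleton_self, List.count_singleton,
    List.count_eq_zero.2 fun hmem : j + 1 ∈ w.take n ↦ by have := h _ hmem; omega] at hyam
  simp at hyam

theorem le_of_mem_take_rowOffset (hw : IsRibbonWord a ov w) (hy : IsYam w) :
    ∀ i, ∀ x ∈ w.take (rowOffset a i), x ≤ i := by
  intro i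
  induction i with
  | zero => simp [rowOffset]
  | succ i ih =>
    intro x hx
    obtain ⟨k, hk, rfl⟩ := List.mem_take_iff_getElem.1 hx
    have hkw : k < w.length := by omega
    rw [rowOffset_add_one] at hk
    rcases lt_or_ge k (rowOffset a i) with hlt | hge
    · exact (ih _ (List.mem_take_iff_getElem.2 ⟨k, by omega, rfl⟩)).trans (Nat.le_succ i)
    · obtain ⟨j, rfl⟩ := Nat.exists_eq_add_of_le hge
      have hi : i < a.length := by
        by_contra! hi
        rw [List.getD_eq_default _ _ hi] at hk
        omega
      rw [← List.getD_eq_getElem w 0]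
      exact (hw.getD_le_row_head hi (by omega)).trans (hy.getD_le_add_one ih)

theorem HasContent.pos_of_mem (hc : HasContent w ν) {x : ℕ} (hx : x ∈ w) : 0 < x := by
  rw [Nat.pos_iff_ne_zero]
  rintro rfl
  exact List.count_eq_zero.1 hc.2 hx

theorem HasContent.length_eq_sum (hc : HasContent w ν) : w.length = ν.sum := by
  rw [← sum_range_count_succ (n := ν.length), Finset.sum_congr rfl fun j _ ↦ hc.1 j,
    ← sum_take_eq_sum_range, List.take_length]
  intro x hx
  obtain ⟨j, rfl⟩ := Nat.exists_eq_add_of_le' (hc.pos_of_mem hx)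
  refine ⟨hc.pos_of_mem hx, ?_⟩
  by_contra! hj
  have := hc.1 j
  rw [List.getD_eq_default _ _ (by omega)] at this
  exact List.count_eq_zero.1 this hx

theorem domLE_of_hasContent (hw : IsRibbonWord a ov w) (hy : IsYam w) (hc : HasContent w ν) :
    DomLE a ν := by
  refine ⟨hw.1.symm.trans hc.length_eq_sum, fun i ↦ ?_⟩
  have hpos : ∀ x ∈ w.take (rowOffset a i), 0 < x ∧ x ≤ i := fun x hx ↦
    ⟨hc.pos_of_mem (List.mem_of_mem_take hx), le_of_mem_take_rowOffset hw hy i x hx⟩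
  calc (a.take i).sum = (w.take (rowOffset a i)).length := by
        rw [List.length_take, hw.1]; exact (min_eq_left (sum_take_le_sum a i)).symm
    _ = ∑ j ∈ Finset.range i, (w.take (rowOffset a i)).count (j + 1) :=
        (sum_range_count_succ hpos).symm
    _ ≤ ∑ j ∈ Finset.range i, ν.getD j 0 := Finset.sum_le_sum fun j _ ↦
        ((List.take_sublist _ w).count_le _).trans_eq (hc.1 j)
    _ = (ν.take i).sum := (sum_take_eq_sum_range ν i).symm

-- Across an overlap the word strictly increases, so one of the two letters there is not `c`.
theorem count_drop_rowOffset_add_le (h2 : PartsGE a 2) (hp : IsOverlapSeq a p)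
    (hw : IsRibbonWord a (ovOf p) w) (c i : ℕ) (hi : i < a.length) :
    (w.drop (rowOffset a i + 1)).count c + p.getD i 0 + 1 ≤ (a.drop i).sum := by
  have hA := rowOffset_add_one a i
  have hS := sum_drop_eq_getD_add a i
  have hai := h2.le_getD hi
  rcases eq_or_lt_of_le (Nat.le_sub_one_of_lt hi) with hlast | hlt
  · have hcount := (w.drop (rowOffset a i + 1)).count_le_length (a := c)
    have hsplit : rowOffset a i + (a.drop i).sum = a.sum := List.sum_take_add_sum_drop a i
    rw [List.length_drop, hw.1] at hcount
    rw [hlast, hp.2.1, ← hlast]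
    omega
  have hi' : i + 1 < a.length := by omega
  have ih := count_drop_rowOffset_add_le h2 hp hw c (i + 1) hi'
  rcases hp.2.2 i hi' with hflat | hover
  · have := count_drop_le_add w c (show rowOffset a i + 1 ≤ rowOffset a (i + 1) + 1 by omega)
    omega
  · have hne := (hw.2.2 i hi' (decide_eq_true hover)).ne
    obtain ⟨k, hk⟩ := Nat.exists_eq_add_of_le' (show 1 ≤ rowOffset a (i + 1) by omega)
    rw [hk, Nat.add_sub_cancel] at hne
    rw [hk] at ih
    have hrow := count_drop_le_add w c (show rowOffset a i + 1 ≤ k by omega)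
    have hgap := count_drop_le_add_one_of_getD_ne c hne
    omega
  termination_by a.length - i

theorem getD_add_overlap_le_sum_drop (h2 : PartsGE a 2) (hp : IsOverlapSeq a p)
    (hν : InSupport a p ν) (hi : i < a.length) :
    ν.getD i 0 + p.getD i 0 ≤ (a.drop i).sum := by
  obtain ⟨w, hw, hy, hc⟩ := hν
  have hbound := count_drop_rowOffset_add_le h2 hp hw (i + 1) i hi
  have hhead := count_drop_le_add w (i + 1) (Nat.le_add_right (rowOffset a i) 1)
  have hbefore : (w.take (rowOffset a i)).count (i + 1) = 0 := List.count_eq_zero.2 fun hmem ↦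
    Nat.not_succ_le_self i (le_of_mem_take_rowOffset hw hy i _ hmem)
  have hcount := hc.1 i
  rw [← List.take_append_drop (rowOffset a i) w, List.count_append, hbefore] at hcount
  omega

end Necessity

/-! ### Building fillings row by row -/

section Filling

variable {a w u : List ℕ} {ov : ℕ → Bool} {e f g : ℕ → ℕ} {m : ℕ}

theorem le_getD_zero_of_mem {l : List ℕ} (h : l.Pairwise (· ≥ ·)) {x : ℕ} (hx : x ∈ l) :
    x ≤ l.getD 0 0 := by
  obtain ⟨k, hk, rfl⟩ := List.mem_iff_getElem.1 hx
  rw [← List.getD_eq_getElem l 0 hk]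
  exact antitone_getD h (Nat.zero_le k)

theorem getD_length_sub_one_le_of_mem {l : List ℕ} (h : l.Pairwise (· ≥ ·)) {x : ℕ}
    (hx : x ∈ l) : l.getD (l.length - 1) 0 ≤ x := by
  obtain ⟨k, hk, rfl⟩ := List.mem_iff_getElem.1 hx
  rw [← List.getD_eq_getElem l 0 hk]
  exact antitone_getD h (Nat.le_sub_one_of_lt hk)

theorem rowOffset_append {b : List ℕ} {i : ℕ} (hi : i ≤ a.length) :
    rowOffset (a ++ b) i = rowOffset a i := by
  rw [rowOffset, List.take_append_of_le_length hi, rowOffset]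

theorem rowOffset_length (a : List ℕ) : rowOffset a a.length = a.sum := by
  rw [rowOffset, List.take_length]

theorem rowOffset_le_sum (a : List ℕ) (i : ℕ) : rowOffset a i ≤ a.sum :=
  sum_take_le_sum a i

theorem rowOffset_lt_sum (ha : PartsGE a 1) {i : ℕ} (hi : i < a.length) :
    rowOffset a i < a.sum := by
  have := rowOffset_add_one a i
  have := rowOffset_le_sum a (i + 1)
  have := ha.le_getD hi
  omega

theorem IsRibbonWord.append_row (hw : IsRibbonWord a ov w) (ha : PartsGE a 1)
    (hu : u.Pairwise (· ≥ ·))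
    (hgap : a ≠ [] → ov (a.length - 1) = true → w.getD (a.sum - 1) 0 < u.getD 0 0) :
    IsRibbonWord (a ++ [u.length]) ov (w ++ u) := by
  obtain ⟨hlen, hrow, hov⟩ := hw
  refine ⟨by simp [hlen], fun i j hi hj ↦ ?_, fun i hi hovi ↦ ?_⟩
  · rw [List.length_append, List.length_singleton] at hi
    rw [rowOffset_append (by omega)]
    rcases Nat.lt_succ_iff_lt_or_eq.1 hi with hia | rfl
    · rw [List.getD_append _ _ _ _ hia] at hj
      have := rowOffset_add_one a i
      have := rowOffset_le_sum a (i + 1)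
      rw [List.getD_append _ _ _ _ (by omega), List.getD_append _ _ _ _ (by omega)]
      exact hrow i j hia hj
    · rw [rowOffset_length, List.getD_append_right _ _ _ _ (by omega),
        List.getD_append_right _ _ _ _ (by omega)]
      exact antitone_getD hu (by omega)
  · rw [List.length_append, List.length_singleton] at hi
    rw [rowOffset_append (by omega)]
    rcases Nat.lt_succ_iff_lt_or_eq.1 hi with hia | hia
    · have := rowOffset_lt_sum ha hia
      rw [List.getD_append _ _ _ _ (by omega), List.getD_append _ _ _ _ (by omega)]
      exact hov i hia hovi
    · have hne : a ≠ [] := List.ne_nil_of_length_pos (by omega)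
      have := rowOffset_lt_sum ha (Nat.lt_of_succ_le hia.le)
      rw [hia, rowOffset_length, List.getD_append _ _ _ _ (by omega),
        List.getD_append_right _ _ _ _ hlen.le, hlen, Nat.sub_self]
      exact hgap hne (by rwa [← hia])

theorem IsYam.append (hw : IsYam w) (h : ∀ j, w.count (j + 2) + u.count (j + 2) ≤ w.count (j + 1)) :
    IsYam (w ++ u) := by
  intro k j
  rcases le_total k w.length with hk | hk
  · rw [List.take_append_of_le_length hk]
    exact hw k j
  · rw [List.take_append, List.take_of_length_le hk, List.count_append, List.count_append]
    exact (Nat.add_le_add_left ((List.take_sublist _ u).count_le _) _).trans ((h j).trans (by simp))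

/-- The weakly decreasing word with `d j` letters `j + 1` for each `j < L`; it is the reading word
of a row filled by a horizontal strip with `d j` boxes in its `j`-th row. -/
def stripWord (d : ℕ → ℕ) : ℕ → List ℕ
  | 0 => []
  | L + 1 => List.replicate (d L) (L + 1) ++ stripWord d L

theorem mem_stripWord_iff {d : ℕ → ℕ} {L x : ℕ} :
    x ∈ stripWord d L ↔ ∃ j < L, 0 < d j ∧ x = j + 1 := by
  induction L with
  | zero => simp [stripWord]
  | succ L ih =>
    rw [stripWord, List.mem_append, ih, List.mem_replicate, Nat.exists_lt_succ_right, or_comm,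
      Nat.pos_iff_ne_zero]

theorem length_stripWord (d : ℕ → ℕ) (L : ℕ) :
    (stripWord d L).length = ∑ j ∈ Finset.range L, d j := by
  induction L with
  | zero => rfl
  | succ L ih => rw [stripWord, List.length_append, List.length_replicate, ih,
      Finset.sum_range_succ, add_comm]

theorem pairwise_stripWord (d : ℕ → ℕ) (L : ℕ) : (stripWord d L).Pairwise (· ≥ ·) := by
  induction L with
  | zero => exact List.Pairwise.nil
  | succ L ih =>
    refine List.pairwise_append.2 ⟨List.pairwise_replicate.2 (Or.inr le_rfl), ih, ?_⟩
    intro x hx y hy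
    obtain ⟨j, hj, -, rfl⟩ := mem_stripWord_iff.1 hy
    rw [List.eq_of_mem_replicate hx]
    exact Nat.succ_le_succ hj.le

theorem count_stripWord {d : ℕ → ℕ} {L : ℕ} (hd : ∀ k, L ≤ k → d k = 0) (j : ℕ) :
    (stripWord d L).count (j + 1) = d j := by
  have hcount : ∀ L, (stripWord d L).count (j + 1) = if j < L then d j else 0 := by
    intro L
    induction L with
    | zero => rfl
    | succ L ih =>
      rw [stripWord, List.count_append, List.count_replicate, ih]
      grind
  rw [hcount]
  split_ifs with hj
  · rfl
  · exact (hd j (not_lt.1 hj)).symm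

/-- The shape `f / g` is a horizontal strip of size `m`; shapes are encoded by the functions
giving their row lengths. -/
structure IsHorizontalStrip (g f : ℕ → ℕ) (m : ℕ) : Prop where
  le : ∀ j, g j ≤ f j
  succ_le : ∀ j, f (j + 1) ≤ g j
  sum_eq : ∃ L, (∀ k, L ≤ k → f k = 0) ∧ ∑ j ∈ Finset.range L, f j = ∑ j ∈ Finset.range L, g j + m

/-- Some row of the strip `g / e` lies strictly above some row of the strip `f / g`: the condition
for the rows of a ribbon filled by these two strips to be allowed to overlap. -/
def StripsOverlap (e g f : ℕ → ℕ) : Prop := ∃ p q, p < q ∧ e p < g p ∧ g q < f q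

/-- The ribbon with row lengths `a` and overlaps `ov` has a Littlewood–Richardson filling of
content `f` whose last row is the horizontal strip `f / g`. -/
def HasFilling (a : List ℕ) (ov : ℕ → Bool) (g f : ℕ → ℕ) : Prop :=
  ∃ w, IsRibbonWord a ov w ∧ IsYam w ∧ (∀ j, w.count (j + 1) = f j) ∧ w.count 0 = 0 ∧
    ∀ p, g p < f p → w.getD (a.sum - 1) 0 ≤ p + 1

theorem hasFilling_nil (ov : ℕ → Bool) : HasFilling [] ov 0 0 :=
  ⟨[], by simp [IsRibbonWord], by simp [IsYam], by simp⟩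

theorem HasFilling.append (h : HasFilling a ov e g) (hs : IsHorizontalStrip g f m)
    (ha : PartsGE a 1) (hgap : a ≠ [] → ov (a.length - 1) = true → StripsOverlap e g f) :
    HasFilling (a ++ [m]) ov g f := by
  obtain ⟨w, hw, hy, hc, hc0, hlast⟩ := h
  obtain ⟨L, hL, hsum⟩ := hs.sum_eq
  set u := stripWord (fun j ↦ f j - g j) L with hu
  have hmem : ∀ {q}, g q < f q → q + 1 ∈ u := fun {q} hq ↦ mem_stripWord_iff.2
    ⟨q, by by_contra! hLq; have := hL q hLq; omega, Nat.sub_pos_of_lt hq, rfl⟩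
  have hcount : ∀ j, u.count (j + 1) = f j - g j :=
    count_stripWord fun k hk ↦ by rw [hL k hk, Nat.zero_sub]
  have hlen : u.length = m := by
    rw [hu, length_stripWord, Finset.sum_tsub_distrib _ fun j _ ↦ hs.le j, hsum,
      Nat.add_sub_cancel_left]
  have hdecr := pairwise_stripWord (fun j ↦ f j - g j) L
  have hcat : ∀ j, (w ++ u).count (j + 1) = f j := fun j ↦ by
    rw [List.count_append, hc, hcount, Nat.add_sub_cancel' (hs.le j)]
  refine ⟨w ++ u, hlen ▸ hw.append_row ha hdecr fun hne hov ↦ ?_, hy.append fun j ↦ ?_, hcat, ?_,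
    fun p hp ↦ ?_⟩
  · obtain ⟨p, q, hpq, hp, hq⟩ := hgap hne hov
    exact (hlast p hp).trans_lt ((Nat.succ_lt_succ hpq).trans_le
      (le_getD_zero_of_mem hdecr (hmem hq)))
  · rw [← List.count_append, hcat (j + 1), hc]
    exact hs.succ_le j
  · rw [List.count_append, hc0, List.count_eq_zero.2 fun h0 ↦ ?_]
    obtain ⟨j, -, -, hj⟩ := mem_stripWord_iff.1 h0
    omega
  · have hpos := List.length_pos_of_mem (hmem hp)
    rw [List.sum_append, List.sum_singleton, List.getD_append_right _ _ _ _ (by rw [hw.1]; omega),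
      hw.1, show a.sum + m - 1 - a.sum = u.length - 1 by omega]
    exact getD_length_sub_one_le_of_mem hdecr (hmem hp)

theorem HasFilling.inSupportOv {ν : List ℕ} (h : HasFilling a ov g (ν.getD · 0)) :
    InSupportOv a ov ν :=
  let ⟨w, hw, hy, hc, hc0, _⟩ := h
  ⟨w, hw, hy, hc, hc0⟩

end Filling

/-! ### Removing horizontal strips -/

section Removal

variable {a b : List ℕ} {f l : ℕ → ℕ} {m i : ℕ}

/-- The shape with row lengths `f` has `a.sum` boxes and dominates the composition `a`. The two
inequalities between sums force `∑ j < i, f j = a.sum` as soon as `a.length ≤ i`. -/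
structure Dominates (f : ℕ → ℕ) (a : List ℕ) : Prop where
  antitone : Antitone f
  sum_take_le : ∀ i, (a.take i).sum ≤ ∑ j ∈ Finset.range i, f j
  sum_range_le : ∀ i, ∑ j ∈ Finset.range i, f j ≤ a.sum

theorem dominates_getD {ν : List ℕ} (hν : IsPartition ν) (h : DomLE a ν) :
    Dominates (ν.getD · 0) a where
  antitone := antitone_getD hν.1
  sum_take_le i := (h.2 i).trans_eq (sum_take_eq_sum_range ν i)
  sum_range_le i := by
    rw [← sum_take_eq_sum_range, h.1]
    exact sum_take_le_sum ν i

theorem Dominates.sum_range_eq (h : Dominates f a) (hi : a.length ≤ i) :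
    ∑ j ∈ Finset.range i, f j = a.sum :=
  (h.sum_range_le i).antisymm ((h.sum_take_le i).trans' (by rw [List.take_of_length_le hi]))

theorem Dominates.eq_zero (h : Dominates f a) (hi : a.length ≤ i) : f i = 0 := by
  have := h.sum_range_eq hi
  have := h.sum_range_le (i + 1)
  rw [Finset.sum_range_succ] at this
  omega

theorem sum_take_add_le_sum_take_append (hm : PartsGE b m) (i : ℕ) :
    (b.take i).sum + m ≤ ((b ++ [m]).take (i + 1)).sum := by
  rcases lt_or_ge i b.length with hi | hi
  · rw [List.take_append_of_le_length hi, sum_take_add_one]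
    exact Nat.add_le_add_left (hm.le_getD hi) _
  · rw [List.take_of_length_le hi, List.take_of_length_le (by simpa using hi)]
    simp

/-- The number of boxes in the first `i` rows of the highest horizontal strip of size `m` that can
be removed from the shape `f`, when at least `l j` boxes have to be removed from each row `j`: at
most `f i` boxes can come from the rows below. -/
def stripPrefix (f l : ℕ → ℕ) (m i : ℕ) : ℕ := max (∑ j ∈ Finset.range i, l j) (m - f i)

/-- The shape `f` with the strip counted by `stripPrefix f l m` removed. -/
def removeStrip (f l : ℕ → ℕ) (m j : ℕ) : ℕ :=
  f j + stripPrefix f l m j - stripPrefix f l m (j + 1)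

theorem stripPrefix_add_le (hl : ∀ j, l j + f (j + 1) ≤ f j) (i : ℕ) :
    stripPrefix f l m i + l i ≤ stripPrefix f l m (i + 1) := by
  have := hl i
  rw [stripPrefix, stripPrefix, Finset.sum_range_succ]
  omega

theorem stripPrefix_succ_add_le (hl : ∀ j, l j + f (j + 1) ≤ f j) (i : ℕ) :
    stripPrefix f l m (i + 1) + f (i + 1) ≤ stripPrefix f l m i + f i := by
  have := hl i
  rw [stripPrefix, stripPrefix, Finset.sum_range_succ]
  omega

theorem removeStrip_add_le (hl : ∀ j, l j + f (j + 1) ≤ f j) (j : ℕ) :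
    removeStrip f l m j + l j ≤ f j := by
  have := stripPrefix_add_le (m := m) hl j
  have := stripPrefix_succ_add_le (m := m) hl j
  rw [removeStrip]
  omega

theorem le_removeStrip (hl : ∀ j, l j + f (j + 1) ≤ f j) (j : ℕ) :
    f (j + 1) ≤ removeStrip f l m j := by
  have := stripPrefix_succ_add_le (m := m) hl j
  rw [removeStrip]
  omega

theorem sum_range_removeStrip (hl : ∀ j, l j + f (j + 1) ≤ f j) (hm : m ≤ f 0) (i : ℕ) :
    ∑ j ∈ Finset.range i, removeStrip f l m j + stripPrefix f l m i =
      ∑ j ∈ Finset.range i, f j := by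
  induction i with
  | zero => simp [stripPrefix, hm]
  | succ i ih =>
    have := stripPrefix_succ_add_le (m := m) hl i
    rw [Finset.sum_range_succ, Finset.sum_range_succ, removeStrip]
    omega

theorem Dominates.exists_strip (h : Dominates f (b ++ [m])) (hm : PartsGE b m)
    (hl : ∀ j, l j + f (j + 1) ≤ f j)
    (hsum : ∀ i, ∑ j ∈ Finset.range i, l j + (b.take i).sum ≤ ∑ j ∈ Finset.range i, f j) :
    ∃ g, Dominates g b ∧ IsHorizontalStrip g f m ∧ ∀ j, g j + l j ≤ f j := by
  have hnext : ∀ i, (b.take i).sum + m ≤ ∑ j ∈ Finset.range i, f j + f i := fun i ↦ by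
    rw [← Finset.sum_range_succ]
    exact (sum_take_add_le_sum_take_append hm i).trans (h.sum_take_le _)
  have hG := sum_range_removeStrip (m := m) hl (by simpa using hnext 0)
  have hle := removeStrip_add_le (m := m) hl
  have htotal := h.sum_range_le
  rw [List.sum_append, List.sum_singleton] at htotal
  refine ⟨removeStrip f l m, ⟨?_, fun i ↦ ?_, fun i ↦ ?_⟩, ⟨?_, le_removeStrip hl, ?_⟩, hle⟩
  · exact antitone_nat_of_succ_le fun j ↦ ((Nat.le_add_right _ _).trans (hle _)).trans
      (le_removeStrip hl j)
  · have hGi := hG i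
    have := hsum i
    have := hnext i
    rw [stripPrefix] at hGi
    omega
  · have hGi := hG i
    have hFi := htotal (i + 1)
    rw [stripPrefix] at hGi
    rw [Finset.sum_range_succ] at hFi
    omega
  · exact fun j ↦ (Nat.le_add_right _ _).trans (hle j)
  · refine ⟨b.length + 1, fun k hk ↦ h.eq_zero (by simpa using hk), ?_⟩
    have hf : f (b.length + 1) = 0 := h.eq_zero (by simp)
    have hGb := hG (b.length + 1)
    have hLb := hsum (b.length + 1)
    have := htotal (b.length + 1)
    rw [stripPrefix, hf] at hGb
    rw [List.take_of_length_le (Nat.le_succ _)] at hLb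
    omega

end Removal

/-! ### Sufficient conditions -/

section Sufficiency

variable {a b : List ℕ} {ov : ℕ → Bool} {f : ℕ → ℕ} {m : ℕ}

theorem partsGE_of_pairwise_append (h : (b ++ [m]).Pairwise (· ≥ ·)) : PartsGE b m :=
  fun x hx ↦ (List.pairwise_append.1 h).2.2 x hx m (List.mem_singleton_self m)

-- When every row of `a` adds a new row to the shape, removing highest strips makes the last two
-- strips overlap: the row of the shape added first is absent from the shape before.
theorem Dominates.exists_hasFilling_of_pos (ov : ℕ → Bool) (ha : a.Pairwise (· ≥ ·))
    (h1 : PartsGE a 1) (h : Dominates f a) (hpos : ∀ i < a.length, 0 < f i) :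
    ∃ g, HasFilling a ov g f ∧ ∀ k, a.length ≤ k + 1 → g k = 0 := by
  induction a using List.reverseRecOn generalizing f with
  | nil =>
    obtain rfl : f = 0 := funext fun k ↦ h.eq_zero (Nat.zero_le k)
    exact ⟨0, hasFilling_nil ov, fun _ _ ↦ rfl⟩
  | append_singleton b m ih =>
    rw [List.length_append, List.length_singleton] at hpos ⊢
    have hb1 : PartsGE b 1 := fun x hx ↦ h1 x (List.mem_append_left _ hx)
    obtain ⟨g, hg, hs, -⟩ := h.exists_strip (partsGE_of_pairwise_append ha) (l := 0)
      (fun j ↦ by simpa using h.antitone (Nat.le_succ j)) fun i ↦ by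
        simpa using (h.sum_take_le i).trans' (by simp [List.take_append])
    have hgpos : ∀ i < b.length, 0 < g i := fun i hi ↦
      (hpos (i + 1) (by omega)).trans_le (hs.succ_le i)
    obtain ⟨e, he, he0⟩ := ih (List.pairwise_append.1 ha).1 hb1 hg hgpos
    refine ⟨g, he.append hs hb1 fun hne _ ↦ ⟨b.length - 1, b.length, ?_⟩, fun k hk ↦
      hg.eq_zero (by omega)⟩
    have hlen := List.length_pos_of_ne_nil hne
    rw [he0 (b.length - 1) (by omega), hg.eq_zero le_rfl]
    exact ⟨by omega, hgpos _ (by omega), hpos _ (by omega)⟩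

/-- The shape whose only nonzero rows are the first three, of lengths `x`, `y` and `z`. -/
def threeRows (x y z : ℕ) : ℕ → ℕ
  | 0 => x
  | 1 => y
  | 2 => z
  | _ => 0

theorem isHorizontalStrip_threeRows {x y z x' y' z' : ℕ} (hx : x ≤ x') (hy : y ≤ y') (hz : z ≤ z')
    (hyx : y' ≤ x) (hzy : z' ≤ y) (hm : x' + y' + z' = x + y + z + m) :
    IsHorizontalStrip (threeRows x y z) (threeRows x' y' z') m where
  le | 0 => hx | 1 => hy | 2 => hz | _ + 3 => le_rfl
  succ_le | 0 => hyx | 1 => hzy | 2 => Nat.zero_le _ | _ + 3 => le_rfl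
  sum_eq := ⟨3, fun k hk ↦ by obtain ⟨j, rfl⟩ := Nat.exists_eq_add_of_le' hk; rfl, by
    simpa [Finset.sum_range_succ, threeRows] using hm⟩

theorem hasFilling_four_rows {a₁ a₂ a₃ a₄ : ℕ} {g₁ g₂ g₃ g₄ : ℕ → ℕ}
    (h1 : PartsGE [a₁, a₂, a₃, a₄] 1)
    (s₁ : IsHorizontalStrip 0 g₁ a₁) (s₂ : IsHorizontalStrip g₁ g₂ a₂)
    (s₃ : IsHorizontalStrip g₂ g₃ a₃) (s₄ : IsHorizontalStrip g₃ g₄ a₄)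
    (o₁ : StripsOverlap 0 g₁ g₂) (o₂ : StripsOverlap g₁ g₂ g₃) (o₃ : StripsOverlap g₂ g₃ g₄) :
    HasFilling [a₁, a₂, a₃, a₄] ov g₃ g₄ := by
  have row₁ : HasFilling [a₁] ov 0 g₁ :=
    (hasFilling_nil ov).append s₁ (by simp [PartsGE]) fun hne ↦ absurd rfl hne
  have row₂ : HasFilling [a₁, a₂] ov g₁ g₂ :=
    row₁.append s₂ (fun x hx ↦ h1 x (List.mem_append_left [a₂, a₃, a₄] hx)) fun _ _ ↦ o₁
  have row₃ : HasFilling [a₁, a₂, a₃] ov g₂ g₃ :=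
    row₂.append s₃ (fun x hx ↦ h1 x (List.mem_append_left [a₃, a₄] hx)) fun _ _ ↦ o₂
  exact row₃.append s₄ (fun x hx ↦ h1 x (List.mem_append_left [a₄] hx)) fun _ _ ↦ o₃

-- The chain of shapes `(a₁) ⊆ (x, y) ⊆ (u, v, t) ⊆ (n₁, n₂, n₃)`: `u`, and then `x`, is as large as
-- the later strips and the overlaps allow.
theorem exists_threeRows_chain {a₁ a₂ a₃ a₄ n₁ n₂ n₃ : ℕ} (h₂₁ : a₂ ≤ a₁) (h₃₂ : a₃ ≤ a₂)
    (h₄₃ : a₄ ≤ a₃) (h₄ : 2 ≤ a₄) (hn₂₁ : n₂ ≤ n₁) (hn₃₂ : n₃ ≤ n₂)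
    (hsum : n₁ + n₂ + n₃ = a₁ + a₂ + a₃ + a₄) (hdom : a₁ ≤ n₁) (hb₁ : n₁ + 3 ≤ a₁ + a₂ + a₃ + a₄)
    (hb₂ : n₂ + 2 ≤ a₂ + a₃ + a₄) (hb₃ : n₃ + 1 ≤ a₃ + a₄) :
    ∃ x y u v t,
      (a₁ ≤ x ∧ 0 < y ∧ y ≤ a₁ ∧ x + y = a₁ + a₂) ∧
      (x ≤ u ∧ y ≤ v ∧ v ≤ x ∧ t ≤ y ∧ u + v + t = x + y + a₃) ∧
      (u ≤ n₁ ∧ v ≤ n₂ ∧ n₂ ≤ u ∧ t ≤ n₃ ∧ n₃ ≤ v) ∧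
      (a₁ < x ∧ y < v ∨ 0 < t) ∧ (x < u ∧ v < n₂ ∨ (x < u ∨ y < v) ∧ t < n₃) := by
  rcases lt_trichotomy n₃ 1 with hn₃ | hn₃ | hn₃
  · let u := min n₁ (a₁ + a₂ + a₃ - 2)
    let x := min (u - 1) (a₁ + a₂ - 1)
    exact ⟨x, a₁ + a₂ - x, u, a₁ + a₂ + a₃ - u, 0,
      by omega, by omega, by omega, by omega, by omega⟩
  · let u := min n₁ (a₁ + a₂ + a₃ - 2)
    let x := min u (a₁ + a₂ - 1)
    exact ⟨x, a₁ + a₂ - x, u, a₁ + a₂ + a₃ - u, 0,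
      by omega, by omega, by omega, by omega, by omega⟩
  · let t := max (n₃ - a₄) 1
    let u := min n₁ (a₁ + a₂ + a₃ - t - n₃)
    let x := min u (a₁ + a₂ - t)
    exact ⟨x, a₁ + a₂ - x, u, a₁ + a₂ + a₃ - t - u, t,
      by omega, by omega, by omega, by omega, by omega⟩

theorem threeRows_zero : threeRows 0 0 0 = 0 :=
  funext fun | 0 => rfl | 1 => rfl | 2 => rfl | _ + 3 => rfl

/-- The bound on the row lengths `f` of a shape imposed by three overlaps at the top of the ribbon
with row lengths `a`. -/
def OverlapBound (f : ℕ → ℕ) (a : List ℕ) : Prop := ∀ i < 3, f i + (3 - i) ≤ (a.drop i).sum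

theorem exists_hasFilling_threeRows {a₁ a₂ a₃ a₄ n₁ n₂ n₃ : ℕ} (ov : ℕ → Bool)
    (ha : [a₁, a₂, a₃, a₄].Pairwise (· ≥ ·)) (h2 : PartsGE [a₁, a₂, a₃, a₄] 2)
    (h : Dominates (threeRows n₁ n₂ n₃) [a₁, a₂, a₃, a₄])
    (hb : OverlapBound (threeRows n₁ n₂ n₃) [a₁, a₂, a₃, a₄]) :
    ∃ g, HasFilling [a₁, a₂, a₃, a₄] ov g (threeRows n₁ n₂ n₃) := by
  have h21 : n₂ ≤ n₁ := h.antitone (Nat.zero_le 1)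
  have h32 : n₃ ≤ n₂ := h.antitone (Nat.le_succ 1)
  have hsum : n₁ + n₂ + n₃ = a₁ + a₂ + a₃ + a₄ := by
    simpa [Finset.sum_range_succ, threeRows, add_assoc] using h.sum_range_eq (i := 4) le_rfl
  have hdom : a₁ ≤ n₁ := by simpa [threeRows] using h.sum_take_le 1
  have hb₁ : n₁ + 3 ≤ a₁ + a₂ + a₃ + a₄ := by simpa [add_assoc, threeRows] using hb 0 (by norm_num)
  have hb₂ : n₂ + 2 ≤ a₂ + a₃ + a₄ := by simpa [add_assoc, threeRows] using hb 1 (by norm_num)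
  have hb₃ : n₃ + 1 ≤ a₃ + a₄ := hb 2 (by norm_num)
  obtain ⟨⟨h₂₁, -, -⟩, ⟨h₃₂, -⟩, h₄₃⟩ : (a₂ ≤ a₁ ∧ a₃ ≤ a₁ ∧ a₄ ≤ a₁) ∧ (a₃ ≤ a₂ ∧ a₄ ≤ a₂) ∧
    a₄ ≤ a₃ := by simpa using ha
  have h₄ : 2 ≤ a₄ := h2 a₄ (by simp)
  obtain ⟨x, y, u, v, t, ⟨hx, hy, hya, hxy⟩, ⟨hxu, hyv, hvx, hty, huvt⟩, ⟨hun, hvn, hnu, htn, hnv⟩,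
    o₂, o₃⟩ := exists_threeRows_chain h₂₁ h₃₂ h₄₃ h₄ h21 h32 hsum hdom hb₁ hb₂ hb₃
  have s₁ : IsHorizontalStrip 0 (threeRows a₁ 0 0) a₁ := by
    rw [← threeRows_zero]
    apply isHorizontalStrip_threeRows <;> omega
  have s₂ : IsHorizontalStrip (threeRows a₁ 0 0) (threeRows x y 0) a₂ := by
    apply isHorizontalStrip_threeRows <;> omega
  have s₃ : IsHorizontalStrip (threeRows x y 0) (threeRows u v t) a₃ := by
    apply isHorizontalStrip_threeRows <;> omega
  have s₄ : IsHorizontalStrip (threeRows u v t) (threeRows n₁ n₂ n₃) a₄ := by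
    apply isHorizontalStrip_threeRows <;> omega
  refine ⟨_, hasFilling_four_rows (h2.mono one_le_two) s₁ s₂ s₃ s₄
    ⟨0, 1, one_pos, show 0 < a₁ by omega, hy⟩ ?_ ?_⟩
  · rcases o₂ with ⟨hax, hyv⟩ | ht
    exacts [⟨0, 1, one_pos, hax, hyv⟩, ⟨1, 2, one_lt_two, hy, ht⟩]
  · rcases o₃ with ⟨hxu, hvn⟩ | ⟨hxu | hyv, htn⟩
    exacts [⟨0, 1, one_pos, hxu, hvn⟩, ⟨0, 2, two_pos, hxu, htn⟩, ⟨1, 2, one_lt_two, hyv, htn⟩]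

theorem Dominates.exists_hasFilling_four_rows (ov : ℕ → Bool) (hlen : a.length = 4)
    (ha : a.Pairwise (· ≥ ·)) (h2 : PartsGE a 2) (h : Dominates f a) (hb : OverlapBound f a) :
    ∃ g, HasFilling a ov g f := by
  rcases Nat.eq_zero_or_pos (f 3) with hf | hf
  · obtain ⟨a₁, a₂, a₃, a₄, rfl⟩ := List.length_eq_four.1 hlen
    obtain ⟨n₁, n₂, n₃, rfl⟩ : ∃ n₁ n₂ n₃, f = threeRows n₁ n₂ n₃ :=
      ⟨f 0, f 1, f 2, funext fun
        | 0 => rfl | 1 => rfl | 2 => rfl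
        | k + 3 => Nat.eq_zero_of_le_zero ((h.antitone (Nat.le_add_left 3 k)).trans_eq hf)⟩
    exact exists_hasFilling_threeRows ov ha h2 h hb
  · obtain ⟨g, hg, -⟩ := h.exists_hasFilling_of_pos ov ha (h2.mono one_le_two) fun i hi ↦
      hf.trans_le (h.antitone (by omega))
    exact ⟨g, hg⟩

/-- The number of boxes by which row `j` of the shape `f` exceeds `OverlapBound f b`. -/
def overlapExcess (f : ℕ → ℕ) (b : List ℕ) (j : ℕ) : ℕ :=
  if j < 3 then f j + (3 - j) - (b.drop j).sum else 0

theorem Dominates.add_succ_le (h : Dominates f (b ++ [m])) {j : ℕ} (hj : j ≤ b.length) :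
    f j + f (j + 1) ≤ (b.drop j).sum + m := by
  have htake := h.sum_take_le j
  have htotal := h.sum_range_le (j + 1 + 1)
  have hsplit := List.sum_take_add_sum_drop b j
  rw [List.take_append_of_le_length hj] at htake
  rw [Finset.sum_range_succ, Finset.sum_range_succ, List.sum_append, List.sum_singleton] at htotal
  omega

theorem Dominates.overlapExcess_add_le (h : Dominates f (b ++ [m])) (hlen : 4 ≤ b.length)
    (h2 : PartsGE b 2) (hm : PartsGE b m) (j : ℕ) :
    overlapExcess f b j + f (j + 1) ≤ f j := by
  have hanti : f (j + 1) ≤ f j := h.antitone (Nat.le_succ j)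
  rw [overlapExcess]
  split_ifs with hj
  · have hpair := h.add_succ_le (show j ≤ b.length by omega)
    have hrows := h2.length_sub_mul_le_sum_drop j
    have hmrows := (Nat.mul_le_mul_right m (show 4 - j ≤ b.length - j by omega)).trans
      (hm.length_sub_mul_le_sum_drop j)
    interval_cases j <;> omega
  · simpa using hanti

theorem Dominates.sum_range_three_of_eq_zero (h : Dominates f a) (hf : f 3 = 0) :
    ∑ j ∈ Finset.range 3, f j = a.sum := by
  rw [← h.sum_range_eq (Nat.le_add_right a.length 3)]
  exact (Finset.eventually_constant_sum (fun k hk ↦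
    Nat.eq_zero_of_le_zero ((h.antitone hk).trans_eq hf)) (Nat.le_add_left 3 _)).symm

theorem Dominates.sum_take_le_of_append (h : Dominates f (b ++ [m])) (i : ℕ) :
    (b.take i).sum ≤ ∑ j ∈ Finset.range i, f j :=
  (h.sum_take_le i).trans' (by simp [List.take_append])

theorem OverlapBound.le_of_append (hb : OverlapBound f (b ++ [m])) {j : ℕ} (hj : j < 3) :
    f j + (3 - j) ≤ (b.drop j).sum + m := by
  refine (hb j hj).trans ?_
  rw [List.drop_append, List.sum_append]
  exact Nat.add_le_add_left ((List.drop_sublist _ _).sum_le_sum fun _ _ ↦ Nat.zero_le _) _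

theorem overlapExcess_of_three_le {j : ℕ} (hj : 3 ≤ j) : overlapExcess f b j = 0 :=
  if_neg hj.not_gt

theorem Dominates.pos_of_overlapBound (h : Dominates f a) (hb : OverlapBound f a) : 0 < f 1 := by
  by_contra! hf
  have h21 : f 2 ≤ f 1 := h.antitone (Nat.le_succ 1)
  have h32 : f 3 ≤ f 2 := h.antitone (Nat.le_succ 2)
  have htotal := h.sum_range_three_of_eq_zero (by omega)
  have hb₀ : f 0 + 3 ≤ a.sum := hb 0 (by norm_num)
  simp only [Finset.sum_range_succ, Finset.sum_range_zero] at htotal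
  omega

theorem overlapExcess_zero (f : ℕ → ℕ) (b : List ℕ) :
    overlapExcess f b 0 = f 0 + 3 - b.sum := rfl

theorem overlapExcess_one (f : ℕ → ℕ) (b : List ℕ) :
    overlapExcess f b 1 = f 1 + 2 - (b.drop 1).sum := rfl

theorem overlapExcess_two (f : ℕ → ℕ) (b : List ℕ) :
    overlapExcess f b 2 = f 2 + 1 - (b.drop 2).sum := rfl

theorem Dominates.sum_range_overlapExcess_add_sum_take_le (h : Dominates f (b ++ [m]))
    (hlen : 4 ≤ b.length) (h2 : PartsGE b 2) (hf : 0 < f 1) {i : ℕ} (hi : i ≤ 3) :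
    ∑ j ∈ Finset.range i, overlapExcess f b j + (b.take i).sum ≤ ∑ j ∈ Finset.range i, f j := by
  have hsplit := List.sum_take_add_sum_drop b
  have hsplit₁ := hsplit 1
  have hsplit₂ := hsplit 2
  have hsplit₃ := hsplit 3
  have hrows := h2.length_sub_mul_le_sum_drop
  have hrows₁ := hrows 1
  have hrows₂ := hrows 2
  have hrows₃ := hrows 3
  have hdom := h.sum_take_le_of_append
  have hdom₁ : (b.take 1).sum ≤ f 0 := by simpa using hdom 1
  have hdom₂ : (b.take 2).sum ≤ f 0 + f 1 := by simpa [Finset.sum_range_succ] using hdom 2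
  have hdom₃ : (b.take 3).sum ≤ f 0 + f 1 + f 2 := by simpa [Finset.sum_range_succ] using hdom 3
  interval_cases i <;>
    simp only [Finset.sum_range_succ, Finset.sum_range_zero, List.take_zero, List.sum_nil,
      overlapExcess_zero, overlapExcess_one, overlapExcess_two]
  all_goals omega

theorem Dominates.sum_range_three_overlapExcess_add_sum_le (h : Dominates f (b ++ [m]))
    (hlen : 4 ≤ b.length) (h2 : PartsGE b 2) (hb : OverlapBound f (b ++ [m]))
    (hpos : ∃ j < 3, 0 < overlapExcess f b j) :
    ∑ j ∈ Finset.range 3, overlapExcess f b j + b.sum ≤ ∑ j ∈ Finset.range 4, f j := by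
  have hsplit := List.sum_take_add_sum_drop b
  have hsplit₁ := hsplit 1
  have hsplit₂ := hsplit 2
  have hrows := h2.length_sub_mul_le_sum_drop
  have hrows₁ := hrows 1
  have hrows₂ := hrows 2
  have hdom := h.sum_take_le_of_append
  have hdom₁ : (b.take 1).sum ≤ f 0 := by simpa using hdom 1
  have hdom₂ : (b.take 2).sum ≤ f 0 + f 1 := by simpa [Finset.sum_range_succ] using hdom 2
  have hb₀ : f 0 + 3 ≤ b.sum + m := hb.le_of_append (j := 0) (by norm_num)
  have hb₁ : f 1 + 2 ≤ (b.drop 1).sum + m := hb.le_of_append (j := 1) (by norm_num)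
  have hb₂ : f 2 + 1 ≤ (b.drop 2).sum + m := hb.le_of_append (j := 2) (by norm_num)
  have h32 : f 3 ≤ f 2 := h.antitone (Nat.le_succ 2)
  have h21 : f 2 ≤ f 1 := h.antitone (Nat.le_succ 1)
  have htotal : f 3 = 0 → f 0 + f 1 + f 2 = b.sum + m := fun hf ↦ by
    simpa [Finset.sum_range_succ] using h.sum_range_three_of_eq_zero hf
  obtain ⟨j, hj, hpos⟩ := hpos
  simp only [Finset.sum_range_succ, Finset.sum_range_zero,
    overlapExcess_zero, overlapExcess_one, overlapExcess_two]
  interval_cases j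
  · rw [overlapExcess_zero] at hpos
    omega
  · rw [overlapExcess_one] at hpos
    omega
  · rw [overlapExcess_two] at hpos
    omega

theorem Dominates.sum_range_overlapExcess_add_le (h : Dominates f (b ++ [m]))
    (hlen : 4 ≤ b.length) (h2 : PartsGE b 2) (hb : OverlapBound f (b ++ [m])) (i : ℕ) :
    ∑ j ∈ Finset.range i, overlapExcess f b j + (b.take i).sum ≤ ∑ j ∈ Finset.range i, f j := by
  rcases le_or_gt i 3 with hi | hi
  · exact h.sum_range_overlapExcess_add_sum_take_le hlen h2 (h.pos_of_overlapBound hb) hi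
  by_cases hpos : ∃ j < 3, 0 < overlapExcess f b j
  · calc ∑ j ∈ Finset.range i, overlapExcess f b j + (b.take i).sum
        ≤ ∑ j ∈ Finset.range 3, overlapExcess f b j + b.sum := by
          rw [Finset.eventually_constant_sum (fun _ hk ↦ overlapExcess_of_three_le hk) hi.le]
          exact Nat.add_le_add_left (sum_take_le_sum b i) _
      _ ≤ ∑ j ∈ Finset.range 4, f j :=
          h.sum_range_three_overlapExcess_add_sum_le hlen h2 hb hpos
      _ ≤ ∑ j ∈ Finset.range i, f j := Finset.sum_le_sum_of_subset (Finset.range_mono hi)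
  · rw [Finset.sum_eq_zero fun j _ ↦ ?_, zero_add]
    · exact h.sum_take_le_of_append i
    · rcases lt_or_ge j 3 with hj | hj
      · exact Nat.eq_zero_of_not_pos fun hlt ↦ hpos ⟨j, hj, hlt⟩
      · exact overlapExcess_of_three_le hj

theorem Dominates.exists_strip_of_overlapBound (hlen : 4 ≤ b.length) (h2 : PartsGE b 2)
    (hm : PartsGE b m) (h : Dominates f (b ++ [m])) (hb : OverlapBound f (b ++ [m])) :
    ∃ g, Dominates g b ∧ IsHorizontalStrip g f m ∧ OverlapBound g b := by
  obtain ⟨g, hg, hs, hle⟩ := h.exists_strip hm (h.overlapExcess_add_le hlen h2 hm)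
    (h.sum_range_overlapExcess_add_le hlen h2 hb)
  refine ⟨g, hg, hs, fun j hj ↦ ?_⟩
  have := hle j
  rw [overlapExcess, if_pos hj] at this
  omega

theorem Dominates.exists_hasFilling (hov : ∀ i, 3 ≤ i → ov i = false)
    (ha : a.Pairwise (· ≥ ·)) (h2 : PartsGE a 2) (hlen : 4 ≤ a.length) (h : Dominates f a)
    (hb : OverlapBound f a) : ∃ g, HasFilling a ov g f := by
  induction a using List.reverseRecOn generalizing f with
  | nil => simp at hlen
  | append_singleton b m ih =>
    rcases hlen.eq_or_lt with h4 | h5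
    · exact h.exists_hasFilling_four_rows ov h4.symm ha h2 hb
    · have hb4 : 4 ≤ b.length := by simpa using h5
      have hb2 : PartsGE b 2 := fun x hx ↦ h2 x (List.mem_append_left _ hx)
      obtain ⟨g, hg, hs, hgb⟩ := h.exists_strip_of_overlapBound hb4 hb2
        (partsGE_of_pairwise_append ha) hb
      obtain ⟨e, he⟩ := ih (List.pairwise_append.1 ha).1 hb2 hb4 hg hgb
      refine ⟨g, he.append hs (hb2.mono one_le_two) fun _ htrue ↦ ?_⟩
      rw [hov _ (by omega)] at htrue
      exact absurd htrue Bool.false_ne_true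

end Sufficiency

/-! ### The overlapping partition `(3, 2, 1, 0, …, 0)` -/

section ThreeTwoOne

variable {a p ν : List ℕ}

theorem getD_three_two_one_append_replicate (n i : ℕ) :
    ([3, 2, 1] ++ List.replicate n 0).getD i 0 = 3 - i := by
  match i with
  | 0 | 1 | 2 => rfl
  | i + 3 => rw [List.getD_append_right _ _ _ _ (Nat.le_add_left 3 i)]; simp

theorem isOverlapSeq_of_getD_eq (hlen : 4 ≤ a.length) (hpl : p.length = a.length)
    (hp : ∀ i, p.getD i 0 = 3 - i) : IsOverlapSeq a p :=
  ⟨hpl, by rw [hp]; omega, fun i _ ↦ by rw [hp, hp]; omega⟩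

theorem ovOf_eq_false_of_getD_eq (hp : ∀ i, p.getD i 0 = 3 - i) {i : ℕ} (hi : 3 ≤ i) :
    ovOf p i = false :=
  decide_eq_false (by rw [hp, hp]; omega)

theorem mem_supportSet_iff (ha : a.Pairwise (· ≥ ·)) (h2 : PartsGE a 2) (hlen : 4 ≤ a.length)
    (hpl : p.length = a.length) (hp : ∀ i, p.getD i 0 = 3 - i) :
    ν ∈ SupportSet a p ↔ IsPartition ν ∧ DomLE a ν ∧ OverlapBound (ν.getD · 0) a := by
  refine and_congr_right fun hν ↦ ⟨fun h ↦ ⟨?_, fun i hi ↦ ?_⟩, fun ⟨hdom, hb⟩ ↦ ?_⟩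
  · obtain ⟨w, hw, hy, hc⟩ := h
    exact domLE_of_hasContent hw hy hc
  · rw [← hp i]
    exact getD_add_overlap_le_sum_drop h2 (isOverlapSeq_of_getD_eq hlen hpl hp) h (by omega)
  · obtain ⟨g, hg⟩ := (dominates_getD hν hdom).exists_hasFilling
      (fun i ↦ ovOf_eq_false_of_getD_eq hp) ha h2 hlen hb
    exact hg.inSupportOv

theorem domLE_pair_iff {n k : ℕ} : DomLE ν [n, k] ↔ ν.sum = n + k ∧ ν.getD 0 0 ≤ n := by
  have htake₁ : (ν.take 1).sum = ν.getD 0 0 := by simpa using sum_take_add_one ν 0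
  constructor
  · rintro ⟨hsum, hle⟩
    exact ⟨by simpa using hsum, by simpa [htake₁] using hle 1⟩
  · rintro ⟨hsum, hle⟩
    refine ⟨by simpa using hsum, fun
      | 0 => by simp
      | 1 => by simpa [htake₁] using hle
      | i + 2 => by simpa [← hsum] using sum_take_le_sum ν (i + 2)⟩

theorem mem_intervalSet_iff (hsum : p.getD 0 0 ≤ a.sum) :
    ν ∈ IntervalSet a p ↔ IsPartition ν ∧ DomLE a ν ∧ ν.getD 0 0 + p.getD 0 0 ≤ a.sum := by
  refine and_congr_right fun _ ↦ and_congr_right fun hdom ↦ ?_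
  rw [domLE_pair_iff, Nat.sub_add_cancel hsum, Nat.le_sub_iff_add_le hsum]
  exact and_iff_right hdom.1.symm

theorem fullSupport_iff_forall_overlapBound (ha : a.Pairwise (· ≥ ·)) (h2 : PartsGE a 2)
    (hlen : 4 ≤ a.length) (hpl : p.length = a.length) (hp : ∀ i, p.getD i 0 = 3 - i) :
    FullSupport a p ↔ ∀ ν, IsPartition ν → DomLE a ν → ν.getD 0 0 + 3 ≤ a.sum →
      OverlapBound (ν.getD · 0) a := by
  have hrows := h2.length_sub_mul_le_sum_drop 0
  rw [List.drop_zero] at hrows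
  simp only [FullSupport, Set.ext_iff, mem_supportSet_iff ha h2 hlen hpl hp,
    mem_intervalSet_iff (show p.getD 0 0 ≤ a.sum by rw [hp]; omega), hp 0, Nat.sub_zero]
  exact forall_congr' fun ν ↦ ⟨fun h hν hdom hle ↦ (h.2 ⟨hν, hdom, hle⟩).2.2,
    fun h ↦ ⟨fun ⟨hν, hdom, hb⟩ ↦ ⟨hν, hdom, hb 0 (by norm_num)⟩,
      fun ⟨hν, hdom, hle⟩ ↦ ⟨hν, hdom, h hν hdom hle⟩⟩⟩

theorem domLE_of_forall_lt_length (hsum : a.sum = ν.sum)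
    (h : ∀ i < ν.length, (a.take i).sum ≤ (ν.take i).sum) : DomLE a ν := by
  refine ⟨hsum, fun i ↦ ?_⟩
  rcases lt_or_ge i ν.length with hi | hi
  · exact h i hi
  · rw [List.take_of_length_le hi, ← hsum]
    exact sum_take_le_sum a i

theorem overlapBound_getD_of_lt (hν : IsPartition ν) (hdom : DomLE a ν)
    (hle : ν.getD 0 0 + 3 ≤ a.sum) (h₁ : a.getD 0 0 + 2 < (a.drop 1).sum)
    (h₂ : a.getD 1 0 < (a.drop 2).sum) : OverlapBound (ν.getD · 0) a := by
  have hanti := antitone_getD hν.1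
  have h10 : ν.getD 1 0 ≤ ν.getD 0 0 := hanti (Nat.zero_le 1)
  have h21 : ν.getD 2 0 ≤ ν.getD 1 0 := hanti (Nat.le_succ 1)
  have hsplit₀ : a.sum = a.getD 0 0 + (a.drop 1).sum := sum_drop_eq_getD_add a 0
  have hsplit₁ : (a.drop 1).sum = a.getD 1 0 + (a.drop 2).sum := sum_drop_eq_getD_add a 1
  have htotal := (dominates_getD hν hdom).sum_range_le 3
  have hdom₁ := hdom.2 1
  have hdom₂ := hdom.2 2
  simp only [sum_take_eq_sum_range, Finset.sum_range_succ, Finset.sum_range_zero, zero_add]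
    at htotal hdom₁ hdom₂
  intro i hi
  interval_cases i
  · exact hle
  · change ν.getD 1 0 + 2 ≤ (a.drop 1).sum
    omega
  · change ν.getD 2 0 + 1 ≤ (a.drop 2).sum
    omega

theorem exists_not_overlapBound_of_sum_drop_one_le (h2 : PartsGE a 2) (hlen : 4 ≤ a.length)
    (h : (a.drop 1).sum ≤ a.getD 0 0 + 2) :
    ∃ ν, IsPartition ν ∧ DomLE a ν ∧ ν.getD 0 0 + 3 ≤ a.sum ∧ ¬OverlapBound (ν.getD · 0) a := by
  have hrows := h2.length_sub_mul_le_sum_drop 1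
  have hsplit : a.sum = a.getD 0 0 + (a.drop 1).sum := sum_drop_eq_getD_add a 0
  refine ⟨[a.getD 0 0 + 1, (a.drop 1).sum - 1], ⟨?_, ?_⟩,
    domLE_of_forall_lt_length ?_ fun i hi ↦ ?_, ?_, fun hb ↦ ?_⟩
  · rw [List.pairwise_pair]
    omega
  · simp only [List.forall_mem_cons, List.not_mem_nil, false_imp_iff, implies_true, and_true]
    omega
  · rw [List.sum_pair]
    omega
  · match i with
    | 0 => exact Nat.zero_le _
    | 1 => exact (sum_take_add_one a 0).trans_le (by simp)
  · rw [List.getD_cons_zero]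
    omega
  · have hb₁ : (a.drop 1).sum - 1 + 2 ≤ (a.drop 1).sum := hb 1 (by norm_num)
    omega

theorem exists_not_overlapBound_of_sum_drop_two_le (ha : a.Pairwise (· ≥ ·)) (h2 : PartsGE a 2)
    (hlen : 4 ≤ a.length) (h : (a.drop 2).sum ≤ a.getD 1 0) :
    ∃ ν, IsPartition ν ∧ DomLE a ν ∧ ν.getD 0 0 + 3 ≤ a.sum ∧ ¬OverlapBound (ν.getD · 0) a := by
  have h10 : a.getD 1 0 ≤ a.getD 0 0 := antitone_getD ha (Nat.zero_le 1)
  have hrows := h2.length_sub_mul_le_sum_drop 2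
  have hsplit₀ : a.sum = a.getD 0 0 + (a.drop 1).sum := sum_drop_eq_getD_add a 0
  have hsplit₁ : (a.drop 1).sum = a.getD 1 0 + (a.drop 2).sum := sum_drop_eq_getD_add a 1
  refine ⟨[a.getD 0 0, a.getD 1 0, (a.drop 2).sum], ⟨?_, ?_⟩,
    domLE_of_forall_lt_length ?_ fun i hi ↦ ?_, ?_, fun hb ↦ ?_⟩
  · simp only [List.pairwise_cons, List.forall_mem_cons, List.not_mem_nil, false_imp_iff,
      implies_true, and_true, List.Pairwise.nil]
    omega
  · simp only [List.forall_mem_cons, List.not_mem_nil, false_imp_iff, implies_true, and_true]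
    omega
  · simp only [List.sum_cons, List.sum_nil]
    omega
  · match i with
    | 0 => exact Nat.zero_le _
    | 1 => exact (sum_take_add_one a 0).trans_le (by simp)
    | 2 => simp [sum_take_eq_sum_range, Finset.sum_range_succ]
  · rw [List.getD_cons_zero]
    omega
  · have hb₂ : (a.drop 2).sum + 1 ≤ (a.drop 2).sum := hb 2 (by norm_num)
    omega

end ThreeTwoOne

/-- Corollary `cor:full` (b): for a partition `a` with parts ≥ 2,
`ℓ(a) ≥ 4` and overlapping partition `p = (3,2,1,0,…,0)`, the ribbon `R_a^p` has full Schur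
support `[a, (|a|−3, 3)]` iff `a₁ < Σ_{q=2}^{ℓ(a)} a_q − 2` and `a₂ < Σ_{q=3}^{ℓ(a)} a_q`. -/
theorem full_support_overlap_three_two_one
    (a : List ℕ) (ha : IsPartition a) (h2 : PartsGE a 2) (h4 : 4 ≤ a.length) :
    FullSupport a ([3, 2, 1] ++ List.replicate (a.length - 3) 0) ↔
      (a.getD 0 0 + 2 < (a.drop 1).sum ∧ a.getD 1 0 < (a.drop 2).sum) := by
  have hlength : ([3, 2, 1] ++ List.replicate (a.length - 3) 0).length = a.length := by
    rw [List.length_append, List.length_replicate]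
    exact Nat.add_sub_cancel' (Nat.le_of_succ_le h4)
  rw [fullSupport_iff_forall_overlapBound ha.1 h2 h4 hlength
    (getD_three_two_one_append_replicate _)]
  refine ⟨fun hfull ↦ ?_, fun ⟨h₁, h₂⟩ ν hν hdom hle ↦ overlapBound_getD_of_lt hν hdom hle h₁ h₂⟩
  constructor <;> by_contra! h
  · obtain ⟨ν, hν, hdom, hle, hb⟩ := exists_not_overlapBound_of_sum_drop_one_le h2 h4 h
    exact hb (hfull ν hν hdom hle)
  · obtain ⟨ν, hν, hdom, hle, hb⟩ := exists_not_overlapBound_of_sum_drop_two_le ha.1 h2 h4 h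
    exact hb (hfull ν hν hdom hle)

end RibbonSupport
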